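/- Let n be a positive integer with n ≥ 41 and let (μ_i)_{i ≥ 1} be a nondecreasing sequence of positive real numbers which for every k ≥ 1 satisfies Yang's first inequality ∑_{i=1}^k (μ_{k+1} − μ_i)(μ_{k+1} − (1 + 4/n) μ_i) ≤ 0, and which in addition satisfies ∑_{i=1}^n (μ_{i+1} − μ_1) ≤ 4 μ_1. Then for every k ≥ 41, μ_{k+1} ≤ k^{2/n} · μ_1. (This is the sequence form of part (1) of Theorem 4.5, obtained in the paper by combining Theorem 3.4 with the lower-bound Theorem 4.2 via Theorem 3.1 of Cheng–Yang.) -/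

import Mathlib

/-- A cubic lower bound for the binomial series of `(1 - e) ^ (-p)`. -/
theorem cubic_le_one_sub_rpow_neg {e p : ℝ} (he : 0 ≤ e) (he1 : e < 1) (hp : 0 ≤ p) :
    1 + p * e + p * (p + 1) / 2 * e ^ 2 + p * (p + 1) * (p + 2) / 6 * e ^ 3
      ≤ (1 - e) ^ (-p) := by
  have hlog : e + e ^ 2 / 2 + e ^ 3 / 3 ≤ -Real.log (1 - e) := by
    have h := Real.hasSum_pow_div_log_of_abs_lt_one (x := e) (by rwa [abs_of_nonneg he])
    have h3 := sum_le_hasSum (Finset.range 3) (fun i _ => by positivity) h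
    norm_num [Finset.sum_range_succ] at h3
    linarith
  have hL : 0 ≤ p * (e + e ^ 2 / 2 + e ^ 3 / 3) := by positivity
  have hexp := Real.sum_le_exp_of_nonneg hL 4
  norm_num [Finset.sum_range_succ, Nat.factorial] at hexp
  have hmono : Real.exp (p * (e + e ^ 2 / 2 + e ^ 3 / 3)) ≤ (1 - e) ^ (-p) := by
    rw [Real.rpow_def_of_pos (by linarith)]
    apply Real.exp_le_exp.2
    nlinarith [mul_le_mul_of_nonneg_left hlog hp]
  refine le_trans ?_ (hexp.trans hmono)
  have hsq : p ^ 2 * (e ^ 2 + e ^ 3) ≤ (p * (e + e ^ 2 / 2 + e ^ 3 / 3)) ^ 2 := by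
    have : 0 ≤ p ^ 2 * (e ^ 4 * (11 / 12) + e ^ 5 / 3 + e ^ 6 / 9) := by positivity
    nlinarith
  have hcube : (p * e) ^ 3 ≤ (p * (e + e ^ 2 / 2 + e ^ 3 / 3)) ^ 3 := by
    gcongr
    have : 0 ≤ e ^ 2 / 2 + e ^ 3 / 3 := by positivity
    linarith
  nlinarith

/-- One step of the Cheng–Yang recursion, for the mean `G` and the mean square `T`. -/
theorem recursion_step {t e γ G T m : ℝ} (ht : 0 ≤ t) (he : 0 ≤ e) (hte : (1 + t) * e ≤ 1 / 2)
    (hγ : 2 * t * e + t * (1 + 2 * t) * e ^ 2 + 2 / 3 * t * (1 + 2 * t) * (1 + t) * e ^ 3 ≤ γ)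
    (hY : m ^ 2 - 2 * (1 + t) * G * m + (1 + 2 * t) * T ≤ 0) :
    (1 + t) * (G + e * (m - G)) ^ 2 - (T + e * (m ^ 2 - T))
      ≤ (1 + γ) * ((1 + t) * G ^ 2 - T) := by
  have hγe : 2 * t * e ≤ γ := by
    have : 0 ≤ t * (1 + 2 * t) * e ^ 2 + 2 / 3 * t * (1 + 2 * t) * (1 + t) * e ^ 3 := by
      positivity
    linarith
  have hγ0 : 0 ≤ γ + e := by
    have : 0 ≤ 2 * t * e := by positivity
    linarith
  have hA : 0 ≤ t * (1 + t) * (γ - (2 * t * e + t * (1 + 2 * t) * e ^ 2 +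
      2 / 3 * t * (1 + 2 * t) * (1 + t) * e ^ 3)) * G ^ 2 :=
    mul_nonneg (mul_nonneg (by positivity) (by linarith)) (sq_nonneg _)
  have hC : 0 ≤ ((γ - 2 * t * e) + e * (1 + 2 * t) * (1 / 2 - (1 + t) * e))
      * (m - (1 + t) * G) ^ 2 :=
    mul_nonneg (add_nonneg (by linarith) (mul_nonneg (by positivity) (by linarith)))
      (sq_nonneg _)
  have hB : 0 ≤ (1 + 2 * t) * e * (2 / 3) *
      (t * (1 + t) * e * G - 3 / 2 * (m - (1 + t) * G)) ^ 2 := by positivity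
  have hQ := mul_nonneg hγ0 (neg_nonneg.2 hY)
  have key : 0 ≤ (1 + 2 * t) * ((1 + γ) * ((1 + t) * G ^ 2 - T) -
      ((1 + t) * (G + e * (m - G)) ^ 2 - (T + e * (m ^ 2 - T)))) := by
    linear_combination hA + hC + hB + hQ
  have := nonneg_of_mul_nonneg_right key (by positivity)
  linarith

theorem sq_le_of_yang {t G T m : ℝ} (ht : 0 ≤ t)
    (hY : m ^ 2 - 2 * (1 + t) * G * m + (1 + 2 * t) * T ≤ 0) :
    t * m ^ 2 ≤ (1 + 2 * t) ^ 2 * ((1 + t) * G ^ 2 - T) := by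
  nlinarith [mul_nonneg (by positivity : 0 ≤ 1 + t) (sq_nonneg (m - (1 + 2 * t) * G)),
    mul_nonneg (by positivity : 0 ≤ 1 + 2 * t) (neg_nonneg.2 hY)]

theorem sum_Icc_succ_eq (f : ℕ → ℝ) (k : ℕ) :
    ∑ i ∈ Finset.Icc 1 k, f (i + 1) = ∑ i ∈ Finset.Icc 1 (k + 1), f i - f 1 := by
  induction k with
  | zero => simp
  | succ k ih =>
    rw [Finset.sum_Icc_succ_top (by lia), Finset.sum_Icc_succ_top (b := k + 1) (by lia), ih]
    ring

theorem sq_sum_sub_le (f : ℕ → ℝ) (k : ℕ) :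
    (∑ i ∈ Finset.Icc 1 (k + 1), f i - f 1) ^ 2
      ≤ k * (∑ i ∈ Finset.Icc 1 (k + 1), f i ^ 2 - f 1 ^ 2) := by
  rw [← sum_Icc_succ_eq, ← sum_Icc_succ_eq (fun i => f i ^ 2)]
  simpa using sq_sum_le_card_mul_sum_sq (s := Finset.Icc 1 k) (f := fun i => f (i + 1))

theorem sum_add_mul_le_sum {f : ℕ → ℝ} (hf : ∀ i, 1 ≤ i → f i ≤ f (i + 1)) {k m : ℕ}
    (hkm : k ≤ m) :
    ∑ i ∈ Finset.Icc 1 k, f i + ((m : ℝ) - k) * f (k + 1) ≤ ∑ i ∈ Finset.Icc 1 m, f i := by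
  have hle : ∀ m, k ≤ m → f (k + 1) ≤ f (m + 1) := by
    intro m hm
    induction m, hm using Nat.le_induction with
    | base => exact le_rfl
    | succ m _ ih => exact ih.trans (hf _ (by lia))
  induction m, hkm using Nat.le_induction with
  | base => simp
  | succ m hm ih =>
    rw [Finset.sum_Icc_succ_top (by lia)]
    push_cast
    linarith [hle m hm]

theorem le_natCast_rpow_of_pow_le {x : ℝ} {n k p : ℕ} (hx : 0 ≤ x) (hn : n ≠ 0)
    (h : x ^ n ≤ (k : ℝ) ^ p) : x ≤ (k : ℝ) ^ ((p : ℝ) / n) := by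
  rw [div_eq_mul_inv, Real.rpow_mul (by positivity), Real.rpow_natCast]
  calc x = (x ^ n) ^ ((n : ℝ)⁻¹) := (Real.pow_rpow_inv_natCast hx hn).symm
    _ ≤ _ := by gcongr

theorem exp_four_lt : Real.exp 4 < 55 := by
  have h : Real.exp 4 = Real.exp 1 ^ 4 := by rw [← Real.exp_nat_mul]; norm_num
  rw [h]
  calc Real.exp 1 ^ 4 < 2.7182818286 ^ 4 := by
        gcongr
        exact Real.exp_one_lt_d9
    _ < 55 := by norm_num

theorem exp_eighteen_fifths_lt : Real.exp (18 / 5) < 41 := by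
  have h : Real.exp (18 / 5) ^ 5 = Real.exp 1 ^ 18 := by
    rw [← Real.exp_nat_mul, ← Real.exp_nat_mul]; norm_num
  refine lt_of_pow_lt_pow_left₀ 5 (by norm_num) ?_
  rw [h]
  calc Real.exp 1 ^ 18 < 2.7182818286 ^ 18 := by
        gcongr
        exact Real.exp_one_lt_d9
    _ < 41 ^ 5 := by norm_num

/-- A real number at most `1 + c / n` has `n`-th power at most `exp c`. -/
theorem pow_le_exp_of_le {x c : ℝ} {n : ℕ} (hx : 0 ≤ x) (hn : n ≠ 0) (h : x ≤ 1 + c / n) :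
    x ^ n ≤ Real.exp c := by
  calc x ^ n ≤ Real.exp (c / n) ^ n := by
        gcongr
        linarith [Real.add_one_le_exp (c / n)]
    _ = Real.exp c := by
        rw [← Real.exp_nat_mul]
        congr 1
        field_simp

theorem base_table : ∀ n < 54, 41 ≤ n →
    ((n + 4) ^ 2 * (n ^ 2 + 10 * n + 17)) ^ n ≤ (n + 1) ^ 4 * (n ^ 2 * (n + 1) ^ 2) ^ n := by
  decide +kernel

theorem base_pow_le {n : ℕ} (hn : 41 ≤ n) :
    (((n : ℝ) + 4) ^ 2 * ((n : ℝ) ^ 2 + 10 * n + 17) / ((n : ℝ) ^ 2 * ((n : ℝ) + 1) ^ 2)) ^ n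
      ≤ ((n + 1 : ℕ) : ℝ) ^ 4 := by
  have hn0 : (0 : ℝ) < n := by exact_mod_cast (by lia : 0 < n)
  rcases lt_or_ge n 54 with h | h
  · rw [div_pow, div_le_iff₀ (by positivity)]
    exact_mod_cast base_table n h hn
  · have h1 : ((n : ℝ) + 4) ^ 2 * ((n : ℝ) ^ 2 + 10 * n + 17) / ((n : ℝ) ^ 2 * ((n : ℝ) + 1) ^ 2)
        ≤ (1 + 4 / (n : ℝ)) ^ 4 := by
      rw [div_le_iff₀ (by positivity)]
      have : (1 + 4 / (n : ℝ)) ^ 4 * ((n : ℝ) ^ 2 * ((n : ℝ) + 1) ^ 2)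
          = ((n : ℝ) + 4) ^ 2 * (((n : ℝ) + 4) * (n + 1) / n) ^ 2 := by
        field_simp
      rw [this]
      gcongr
      have h5 : (n : ℝ) + 5 ≤ ((n : ℝ) + 4) * (n + 1) / n := by
        rw [le_div_iff₀ hn0]
        nlinarith
      calc (n : ℝ) ^ 2 + 10 * n + 17 ≤ ((n : ℝ) + 5) ^ 2 := by nlinarith
        _ ≤ _ := by gcongr
    calc _ ≤ ((1 + 4 / (n : ℝ)) ^ 4) ^ n := by gcongr
      _ = ((1 + 4 / (n : ℝ)) ^ n) ^ 4 := by rw [← pow_mul, ← pow_mul, mul_comm]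
      _ ≤ Real.exp 4 ^ 4 := by
          gcongr
          exact pow_le_exp_of_le (by positivity) (by lia) le_rfl
      _ ≤ _ := by
          gcongr
          refine exp_four_lt.le.trans ?_
          exact_mod_cast (by lia : 55 ≤ n + 1)

theorem small_table : ∀ n < 70, 42 ≤ n → ∀ k < 55, 41 ≤ k → k ≤ n →
    (n ^ 2 + 5 * n + 4 - 4 * k + 4 * (n + k + 4)) ^ n
      ≤ k ^ 2 * (n ^ 2 + 5 * n + 4 - 4 * k) ^ n := by
  decide +kernel

theorem small_pow_le {n k : ℕ} (hk : 41 ≤ k) (hkn : k ≤ n) (hn : 42 ≤ n) :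
    (1 + 4 * ((n : ℝ) + k + 4) / ((n : ℝ) ^ 2 + 5 * n + 4 - 4 * k)) ^ n ≤ (k : ℝ) ^ 2 := by
  have hn0 : (42 : ℝ) ≤ n := by exact_mod_cast hn
  have hk0 : (41 : ℝ) ≤ k := by exact_mod_cast hk
  have hkn' : (k : ℝ) ≤ n := by exact_mod_cast hkn
  have hD : (0 : ℝ) < (n : ℝ) ^ 2 + 5 * n + 4 - 4 * k := by nlinarith
  rcases lt_or_ge k 55 with hk5 | hk5
  · rcases lt_or_ge n 70 with hn7 | hn7
    · have h := small_table n hn7 hn k hk5 hk hkn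
      have hsub : 4 * k ≤ n ^ 2 + 5 * n + 4 := by nlinarith
      rw [one_add_div hD.ne', div_pow, div_le_iff₀ (by positivity)]
      have h' : ((((n ^ 2 + 5 * n + 4 - 4 * k + 4 * (n + k + 4)) ^ n : ℕ)) : ℝ)
          ≤ ((k ^ 2 * (n ^ 2 + 5 * n + 4 - 4 * k) ^ n : ℕ) : ℝ) := by exact_mod_cast h
      push_cast [Nat.cast_sub hsub] at h'
      exact h'
    · have hn7' : (70 : ℝ) ≤ n := by exact_mod_cast hn7
      have hkge : (k : ℝ) ≤ 54 := by exact_mod_cast (by lia : k ≤ 54)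
      calc _ ≤ Real.exp (18 / 5 * 2) := by
            apply pow_le_exp_of_le (by positivity) (by lia)
            gcongr 1 + ?_
            rw [div_le_div_iff₀ hD (by linarith)]
            nlinarith
        _ = Real.exp (18 / 5) ^ 2 := by rw [← Real.exp_nat_mul]; norm_num
        _ ≤ _ := by
            gcongr
            exact exp_eighteen_fifths_lt.le.trans hk0
  · have hkge : (55 : ℝ) ≤ k := by exact_mod_cast hk5
    have hle : 1 + 4 * ((n : ℝ) + k + 4) / ((n : ℝ) ^ 2 + 5 * n + 4 - 4 * k)
        ≤ (1 + 4 / (n : ℝ)) ^ 2 := by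
      have : (1 + 4 / (n : ℝ)) ^ 2 = 1 + (8 * n + 16) / (n : ℝ) ^ 2 := by
        field_simp
        ring
      rw [this]
      gcongr 1 + ?_
      rw [div_le_div_iff₀ hD (by positivity)]
      nlinarith [mul_le_mul_of_nonneg_left hkn' (by positivity : (0 : ℝ) ≤ (n : ℝ) ^ 2),
        mul_le_mul_of_nonneg_left hkn' (by positivity : (0 : ℝ) ≤ (n : ℝ))]
    calc _ ≤ ((1 + 4 / (n : ℝ)) ^ 2) ^ n := by gcongr
      _ = ((1 + 4 / (n : ℝ)) ^ n) ^ 2 := by rw [← pow_mul, ← pow_mul, mul_comm]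
      _ ≤ Real.exp 4 ^ 2 := by
          gcongr
          exact pow_le_exp_of_le (by positivity) (by lia) le_rfl
      _ ≤ _ := by
          gcongr
          exact exp_four_lt.le.trans hkge

/-- Yang first inequality in terms of the mean and the mean square. -/
theorem yang_mean {n k : ℕ} {f : ℕ → ℝ} {m : ℝ} (hk : k ≠ 0)
    (h : ∑ i ∈ Finset.Icc 1 k, (m - f i) * (m - (1 + 4 / (n : ℝ)) * f i) ≤ 0) :
    m ^ 2 - 2 * (1 + 2 / (n : ℝ)) * ((∑ i ∈ Finset.Icc 1 k, f i) / k) * m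
      + (1 + 2 * (2 / (n : ℝ))) * ((∑ i ∈ Finset.Icc 1 k, f i ^ 2) / k) ≤ 0 := by
  have hk0 : (0 : ℝ) < k := by exact_mod_cast Nat.pos_of_ne_zero hk
  have e : ∑ i ∈ Finset.Icc 1 k, (m - f i) * (m - (1 + 4 / (n : ℝ)) * f i)
      = k * m ^ 2 - 2 * (1 + 2 / (n : ℝ)) * m * ∑ i ∈ Finset.Icc 1 k, f i
        + (1 + 2 * (2 / (n : ℝ))) * ∑ i ∈ Finset.Icc 1 k, f i ^ 2 := by
    rw [Finset.mul_sum, Finset.mul_sum]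
    have : (k : ℝ) * m ^ 2 = ∑ i ∈ Finset.Icc 1 k, m ^ 2 := by simp
    rw [this, ← Finset.sum_sub_distrib, ← Finset.sum_add_distrib]
    refine Finset.sum_congr rfl fun i _ => ?_
    ring
  rw [e] at h
  have h' := div_nonpos_of_nonpos_of_nonneg h hk0.le
  refine le_of_eq_of_le ?_ h'
  field_simp

/-- The quantity `(1 + 2 / n) G_k ^ 2 - T_k`, where `G_k` and `T_k` are the mean and the mean square
of the first `k` terms. -/
noncomputable def chengYang (n : ℕ) (f : ℕ → ℝ) (k : ℕ) : ℝ :=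
  (1 + 2 / (n : ℝ)) * ((∑ i ∈ Finset.Icc 1 k, f i) / k) ^ 2
    - (∑ i ∈ Finset.Icc 1 k, f i ^ 2) / k

theorem chengYang_succ_le {n k : ℕ} {f : ℕ → ℝ} (hn : 2 ≤ n) (hk : 3 ≤ k)
    (h : ∑ i ∈ Finset.Icc 1 k,
      (f (k + 1) - f i) * (f (k + 1) - (1 + 4 / (n : ℝ)) * f i) ≤ 0) :
    chengYang n f (k + 1) ≤ (((k + 1 : ℕ) : ℝ) / k) ^ ((4 : ℝ) / n) * chengYang n f k := by
  have hk0 : (3 : ℝ) ≤ k := by exact_mod_cast hk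
  have hn0 : (2 : ℝ) ≤ n := by exact_mod_cast hn
  have ht : 2 / (n : ℝ) ≤ 1 := by rw [div_le_one (by linarith)]; exact hn0
  have he : 1 / ((k : ℝ) + 1) ≤ 1 / 4 := by gcongr; linarith
  have ht0 : 0 ≤ 2 / (n : ℝ) := by positivity
  have he0 : 0 ≤ 1 / ((k : ℝ) + 1) := by positivity
  have hb := cubic_le_one_sub_rpow_neg he0 (by linarith)
    (by positivity : 0 ≤ 2 * (2 / (n : ℝ)))
  have hbase : (1 - 1 / ((k : ℝ) + 1)) ^ (-(2 * (2 / (n : ℝ))))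
      = (((k + 1 : ℕ) : ℝ) / k) ^ ((4 : ℝ) / n) := by
    have h1 : 1 - 1 / ((k : ℝ) + 1) = (((k + 1 : ℕ) : ℝ) / k)⁻¹ := by
      push_cast
      field_simp
      ring
    rw [h1, Real.inv_rpow (by positivity), Real.rpow_neg (by positivity), inv_inv]
    congr 1
    ring
  rw [hbase] at hb
  have hs := recursion_step (t := 2 / (n : ℝ)) (e := 1 / ((k : ℝ) + 1))
    (γ := (((k + 1 : ℕ) : ℝ) / k) ^ ((4 : ℝ) / n) - 1) ht0 he0 (by nlinarith)
    (by linarith) (yang_mean (by lia) h)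
  rw [add_sub_cancel] at hs
  refine le_of_eq_of_le ?_ hs
  unfold chengYang
  rw [Finset.sum_Icc_succ_top (by lia), Finset.sum_Icc_succ_top (by lia)]
  push_cast
  congr 1
  · congr 2
    field_simp
    ring
  · field_simp
    ring

theorem chengYang_le {n : ℕ} {f : ℕ → ℝ} (hn : 2 ≤ n)
    (hyang : ∀ k, 1 ≤ k → ∑ i ∈ Finset.Icc 1 k,
        (f (k + 1) - f i) * (f (k + 1) - (1 + 4 / (n : ℝ)) * f i) ≤ 0)
    {m k : ℕ} (hm : 3 ≤ m) (hmk : m ≤ k) :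
    chengYang n f k ≤ ((k : ℝ) / m) ^ ((4 : ℝ) / n) * chengYang n f m := by
  have hm0 : (0 : ℝ) < m := by exact_mod_cast (by lia : 0 < m)
  induction k, hmk using Nat.le_induction with
  | base => rw [div_self hm0.ne', Real.one_rpow, one_mul]
  | succ k hk ih =>
    have hk0 : (0 : ℝ) < k := by exact_mod_cast (by lia : 0 < k)
    refine (chengYang_succ_le hn (hm.trans hk) (hyang k (by lia))).trans ?_
    calc _ ≤ (((k + 1 : ℕ) : ℝ) / k) ^ ((4 : ℝ) / n)
          * (((k : ℝ) / m) ^ ((4 : ℝ) / n) * chengYang n f m) := by gcongr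
      _ = _ := by
          rw [← mul_assoc, ← Real.mul_rpow (by positivity) (by positivity),
            div_mul_div_cancel₀ hk0.ne']

theorem term_le_mean {n k : ℕ} {f : ℕ → ℝ} {m : ℝ} (hk : k ≠ 0)
    (hpos : 0 ≤ ∑ i ∈ Finset.Icc 1 k, f i)
    (h : ∑ i ∈ Finset.Icc 1 k, (m - f i) * (m - (1 + 4 / (n : ℝ)) * f i) ≤ 0) :
    m ≤ (1 + 4 / (n : ℝ)) * ((∑ i ∈ Finset.Icc 1 k, f i) / k) := by
  have hk0 : (0 : ℝ) < k := by exact_mod_cast Nat.pos_of_ne_zero hk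
  have hY := yang_mean hk h
  set G := (∑ i ∈ Finset.Icc 1 k, f i) / k with hG
  have hG0 : 0 ≤ G := by positivity
  have hT : G ^ 2 ≤ (∑ i ∈ Finset.Icc 1 k, f i ^ 2) / k := by
    have := sq_sum_le_card_mul_sum_sq (s := Finset.Icc 1 k) (f := f)
    rw [Nat.card_Icc, Nat.add_sub_cancel] at this
    rw [hG, div_pow, div_le_div_iff₀ (by positivity) hk0]
    nlinarith
  have hn4 : 4 / (n : ℝ) = 2 * (2 / (n : ℝ)) := by ring
  rw [hn4]
  have ht : 0 ≤ 2 / (n : ℝ) := by positivity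
  by_contra! hlt
  have h1 : 0 ≤ 2 * (2 / (n : ℝ)) * G := by positivity
  have h2 : 0 < (m - G) * (m - (1 + 2 * (2 / (n : ℝ))) * G) :=
    mul_pos (by nlinarith) (by linarith)
  nlinarith [mul_le_mul_of_nonneg_left hT (by positivity : 0 ≤ 1 + 2 * (2 / (n : ℝ)))]

theorem le_rpow_of_normalized {n : ℕ} (hn : 41 ≤ n) {f : ℕ → ℝ} (hf1 : f 1 = 1)
    (hpos : ∀ i, 1 ≤ i → 0 < f i) (hmono : ∀ i, 1 ≤ i → f i ≤ f (i + 1))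
    (hyang : ∀ k, 1 ≤ k → ∑ i ∈ Finset.Icc 1 k,
        (f (k + 1) - f i) * (f (k + 1) - (1 + 4 / (n : ℝ)) * f i) ≤ 0)
    (hsum : ∑ i ∈ Finset.Icc 1 (n + 1), f i ≤ n + 5) {k : ℕ} (hk : 41 ≤ k) :
    f (k + 1) ≤ (k : ℝ) ^ ((2 : ℝ) / n) := by
  have hn0 : (41 : ℝ) ≤ n := by exact_mod_cast hn
  have hk0 : (41 : ℝ) ≤ k := by exact_mod_cast hk
  have hy0 := hpos (k + 1) (by lia)
  have hS : ∀ m, 0 ≤ ∑ i ∈ Finset.Icc 1 m, f i := fun m =>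
    Finset.sum_nonneg fun i hi => (hpos i (Finset.mem_Icc.1 hi).1).le
  have hcs := fun m => sq_sum_sub_le f m
  simp only [hf1, one_pow] at hcs
  have hsq := sq_le_of_yang (by positivity) (yang_mean (by lia) (hyang k (by lia)))
  change _ ≤ _ * chengYang n f k at hsq
  rcases le_or_gt k n with hkn | hkn
  · have hkn' : (k : ℝ) ≤ n := by exact_mod_cast hkn
    have hle := (sum_add_mul_le_sum hmono (by lia : k ≤ n + 1)).trans hsum
    push_cast at hle
    refine le_natCast_rpow_of_pow_le (p := 2) hy0.le (by lia) ?_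
    rcases eq_or_lt_of_le hn with rfl | hn42
    · obtain rfl : k = 41 := by lia
      have hy : f 42 ≤ 1.198 := by
        by_contra! hlt
        have hc := hcs 40
        unfold chengYang at hsq
        norm_num at hsq hle hc hlt
        have hS41 := hS 41
        set S := ∑ i ∈ Finset.Icc 1 41, f i
        set Q := ∑ i ∈ Finset.Icc 1 41, f i ^ 2
        have hS' : S ≤ 44.802 := by norm_num; linarith
        have hy2 : (1.198 : ℝ) ^ 2 ≤ f 42 ^ 2 := by norm_num at *; nlinarith
        norm_num at hy2 hS'
        nlinarith
      calc f 42 ^ 41 ≤ 1.198 ^ 41 := by gcongr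
        _ ≤ _ := by norm_num
    · refine le_trans ?_ (small_pow_le hk hkn hn42)
      gcongr
      have hm := term_le_mean (by lia) (hS k) (hyang k (by lia))
      have hD : (0 : ℝ) < (n : ℝ) ^ 2 + 5 * n + 4 - 4 * k := by nlinarith
      have hm' : f (k + 1) * (n * k) ≤ (n + 4) * ∑ i ∈ Finset.Icc 1 k, f i := by
        rw [← le_div_iff₀ (by positivity)]
        refine hm.trans_eq ?_
        field_simp
      rw [one_add_div hD.ne', le_div_iff₀ hD]
      nlinarith
  · have hF := chengYang_le (by lia) hyang (by lia : 3 ≤ n + 1) hkn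
    have hbase : chengYang n f (n + 1) ≤
        (2 * (n : ℝ) ^ 2 + 20 * n + 34) / (n * ((n : ℝ) + 1) ^ 2) := by
      have hc := hcs n
      have hS' := hS (n + 1)
      unfold chengYang
      push_cast
      set S := ∑ i ∈ Finset.Icc 1 (n + 1), f i
      set Q := ∑ i ∈ Finset.Icc 1 (n + 1), f i ^ 2
      have e : (1 + 2 / (n : ℝ)) * (S / ((n : ℝ) + 1)) ^ 2 - Q / ((n : ℝ) + 1)
          = ((n + 2) * S ^ 2 - (n + 1) * (n * Q)) / (n * ((n : ℝ) + 1) ^ 2) := by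
        field_simp
      rw [e]
      gcongr
      nlinarith
    have hroot := le_natCast_rpow_of_pow_le (by positivity) (by lia) (base_pow_le hn)
    have hy2 : f (k + 1) ^ 2 ≤ ((k : ℝ) ^ ((2 : ℝ) / n)) ^ 2 := by
      have hsplit : ((k : ℝ) ^ ((2 : ℝ) / n)) ^ 2
          = ((k : ℝ) / (n + 1 : ℕ)) ^ ((4 : ℝ) / n)
            * ((n + 1 : ℕ) : ℝ) ^ (((4 : ℕ) : ℝ) / n) := by
        rw [Nat.cast_ofNat, ← Real.mul_rpow (by positivity) (by positivity),
          div_mul_cancel₀ _ (by positivity), ← Real.rpow_mul_natCast (by positivity)]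
        congr 1
        push_cast
        ring
      have hpow : 0 ≤ ((k : ℝ) / (n + 1 : ℕ)) ^ ((4 : ℝ) / n) := by positivity
      have hF' : chengYang n f k ≤ ((k : ℝ) / (n + 1 : ℕ)) ^ ((4 : ℝ) / n) *
          ((2 * (n : ℝ) ^ 2 + 20 * n + 34) / (n * ((n : ℝ) + 1) ^ 2)) :=
        hF.trans (mul_le_mul_of_nonneg_left hbase hpow)
      rw [hsplit]
      refine le_trans ?_ (mul_le_mul_of_nonneg_left hroot hpow)
      have h1 := hsq.trans (mul_le_mul_of_nonneg_left hF'
        (by positivity : 0 ≤ (1 + 2 * (2 / (n : ℝ))) ^ 2))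
      have h2 := mul_le_mul_of_nonneg_left h1 (by positivity : 0 ≤ (n : ℝ) / 2)
      refine le_of_eq_of_le ?_ (h2.trans_eq ?_)
      · field_simp
      · field_simp
        ring
    exact (pow_le_pow_iff_left₀ hy0.le (by positivity) (by norm_num)).1 hy2

/-- Sequence form of part (1) of Theorem 4.5. -/
theorem theorem_four_five_part_one
    (n : ℕ) (hn : 41 ≤ n) (μ : ℕ → ℝ)
    (hpos : ∀ i, 1 ≤ i → 0 < μ i)
    (hmono : ∀ i, 1 ≤ i → μ i ≤ μ (i + 1))
    (hyang1 : ∀ k, 1 ≤ k → ∑ i ∈ Finset.Icc 1 k,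
        (μ (k + 1) - μ i) * (μ (k + 1) - (1 + 4 / (n : ℝ)) * μ i) ≤ 0)
    (hlow : ∑ i ∈ Finset.Icc 1 n, (μ (i + 1) - μ 1) ≤ 4 * μ 1) :
    ∀ k, 41 ≤ k → μ (k + 1) ≤ (k : ℝ) ^ ((2 : ℝ) / (n : ℝ)) * μ 1 := by
  intro k hk
  have h1 : 0 < μ 1 := hpos 1 le_rfl
  have hsum : ∑ i ∈ Finset.Icc 1 (n + 1), μ i / μ 1 ≤ n + 5 := by
    rw [Finset.sum_sub_distrib, sum_Icc_succ_eq] at hlow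
    simp only [Finset.sum_const, Nat.card_Icc, Nat.add_sub_cancel, nsmul_eq_mul] at hlow
    rw [← Finset.sum_div, div_le_iff₀ h1]
    linarith
  have h := le_rpow_of_normalized hn (f := fun i => μ i / μ 1) (div_self h1.ne')
    (fun i hi => div_pos (hpos i hi) h1)
    (fun i hi => div_le_div_of_nonneg_right (hmono i hi) h1.le)
    (fun k hk => by
      have e : ∀ i, (μ (k + 1) / μ 1 - μ i / μ 1)
          * (μ (k + 1) / μ 1 - (1 + 4 / (n : ℝ)) * (μ i / μ 1))
          = (μ (k + 1) - μ i) * (μ (k + 1) - (1 + 4 / (n : ℝ)) * μ i) / μ 1 ^ 2 := by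
        intro i
        field_simp
      simp only [e]
      rw [← Finset.sum_div]
      exact div_nonpos_of_nonpos_of_nonneg (hyang1 k hk) (by positivity))
    hsum hk
  exact (div_le_iff₀ h1).1 h
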